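/- Let K be a field, E a finite-dimensional K-vector space, N ≥ 2 an integer, R a subspace of E^⊗N, and n ≥ N an integer. Let R^⊥ ⊆ (E^*)^⊗N be the annihilator of R under the canonical pairing of (E^*)^⊗N with E^⊗N. Under the canonical isomorphism (E^*)^⊗n ≅ (E^⊗n)^* (dual distributivity for finite-dimensional spaces), the annihilator in (E^⊗n)^* of the subspace ⋂_{r+s=n-N, r,s≥0} E^⊗r ⊗ R ⊗ E^⊗s of E^⊗n corresponds exactly to the subspace Σ_{r+s=n-N, r,s≥0} (E^*)^⊗r ⊗ R^⊥ ⊗ (E^*)^⊗s of (E^*)^⊗n. -/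

import Mathlib

open TensorProduct

section Pairing

variable (K : Type*) [CommSemiring K] (ι : Type*) [Fintype ι]
variable (M : ι → Type*) [∀ i, AddCommMonoid (M i)] [∀ i, Module K (M i)]

/-- The canonical pairing map `⨂ᵢ (Mᵢ)^* →ₗ (⨂ᵢ Mᵢ)^*` sending `⊗ᵢ φᵢ` to the functional
`⊗ᵢ xᵢ ↦ ∏ᵢ φᵢ(xᵢ)`. -/
noncomputable def piTensorDualPairing :
    (⨂[K] i, Module.Dual K (M i)) →ₗ[K] Module.Dual K (⨂[K] i, M i) :=
  (LinearMap.llcomp K (⨂[K] i, M i) (⨂[K] _ : ι, K) K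
      (PiTensorProduct.constantBaseRingEquiv ι K).toLinearMap).comp
    PiTensorProduct.piTensorHomMap

end Pairing

section Sub

variable (K : Type*) [Field K] (V : Type*) [AddCommGroup V] [Module K V]

/-- The subspace `V^⊗i ⊗ U ⊗ V^⊗j` of `V^⊗n` (for `i + N + j = n`): the image of the
canonical map `V^⊗i ⊗ (U ⊗ V^⊗j) → V^⊗i ⊗ (V^⊗N ⊗ V^⊗j) ≅ V^⊗(i+(N+j)) ≅ V^⊗n` induced
by the inclusion of `U ⊆ V^⊗N`. -/
noncomputable def subMiddle {N : ℕ} (U : Submodule K (⨂[K]^N V)) (n i j : ℕ)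
    (h : i + (N + j) = n) : Submodule K (⨂[K]^n V) :=
  LinearMap.range ((TensorPower.cast K V h).toLinearMap
    ∘ₗ (TensorPower.mulEquiv (n := i) (m := N + j)).toLinearMap
    ∘ₗ LinearMap.lTensor (⨂[K]^i V)
        ((TensorPower.mulEquiv (n := N) (m := j)).toLinearMap
          ∘ₗ LinearMap.rTensor (⨂[K]^j V) U.subtype))

end Sub

section Helpers

theorem aux_pairing_tprod {K : Type*} [CommSemiring K] {ι : Type*} [Fintype ι]
    {E : Type*} [AddCommMonoid E] [Module K E] (f : ι → Module.Dual K E) (x : ι → E) :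
    piTensorDualPairing K ι (fun _ => E) (PiTensorProduct.tprod K f)
      (PiTensorProduct.tprod K x) = ∏ i, f i (x i) := by
  have h := PiTensorProduct.piTensorHomMap_tprod_tprod (R := K) f x
  show (PiTensorProduct.constantBaseRingEquiv ι K)
    (PiTensorProduct.piTensorHomMap (PiTensorProduct.tprod K f) (PiTensorProduct.tprod K x)) = _
  rw [h, PiTensorProduct.constantBaseRingEquiv_tprod]

theorem aux_pairing_surj (K : Type*) [Field K] (E : Type*) [AddCommGroup E] [Module K E]
    [FiniteDimensional K E] (n : ℕ) :
    Function.Surjective (piTensorDualPairing K (Fin n) (fun _ => E)) := by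
  classical
  intro φ
  let b := Module.finBasis K E
  refine ⟨∑ p : Fin n → Fin (Module.finrank K E),
    φ (PiTensorProduct.tprod K fun i => b (p i)) • PiTensorProduct.tprod K fun i => b.coord (p i), ?_⟩
  apply PiTensorProduct.ext
  refine Module.Basis.ext_multilinear (fun _ => b) fun v => ?_
  simp only [LinearMap.compMultilinearMap_apply, map_sum, map_smul, LinearMap.sum_apply,
    LinearMap.smul_apply, aux_pairing_tprod]
  rw [Finset.sum_eq_single v]
  · simp
  · intro p _ hp
    obtain ⟨i, hi⟩ := Function.ne_iff.mp hp
    rw [Finset.prod_eq_zero (Finset.mem_univ i), smul_zero]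
    simp [hi.symm]
  · simp

theorem aux_mulEquiv_tprod {K : Type*} [Field K] {E : Type*} [AddCommGroup E] [Module K E]
    {m n : ℕ} (x : Fin m → E) (y : Fin n → E) :
    TensorPower.mulEquiv (R := K) (PiTensorProduct.tprod K x ⊗ₜ[K] PiTensorProduct.tprod K y) =
      PiTensorProduct.tprod K (Fin.append x y) :=
  TensorPower.tprod_mul_tprod K x y

theorem aux_pairing_mul {K : Type*} [Field K] {E : Type*} [AddCommGroup E] [Module K E]
    {m n : ℕ} (a : ⨂[K]^m (Module.Dual K E)) (b : ⨂[K]^n (Module.Dual K E))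
    (x : ⨂[K]^m E) (y : ⨂[K]^n E) :
    piTensorDualPairing K (Fin (m + n)) (fun _ => E) (TensorPower.mulEquiv (a ⊗ₜ[K] b))
      (TensorPower.mulEquiv (x ⊗ₜ[K] y)) =
    piTensorDualPairing K (Fin m) (fun _ => E) a x *
      piTensorDualPairing K (Fin n) (fun _ => E) b y := by
  induction a using PiTensorProduct.induction_on with
  | add a a' h h' => simp only [TensorProduct.add_tmul, map_add, LinearMap.add_apply, h, h', add_mul]
  | smul_tprod r f =>
  induction b using PiTensorProduct.induction_on with
  | add a a' h h' => simp only [TensorProduct.tmul_add, map_add, LinearMap.add_apply, h, h', mul_add]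
  | smul_tprod s g =>
  induction x using PiTensorProduct.induction_on with
  | add a a' h h' => simp only [TensorProduct.add_tmul, map_add, h, h', add_mul]
  | smul_tprod t x =>
  induction y using PiTensorProduct.induction_on with
  | add a a' h h' => simp only [TensorProduct.tmul_add, map_add, h, h', mul_add]
  | smul_tprod u y =>
  simp only [← TensorProduct.smul_tmul', TensorProduct.tmul_smul, map_smul, LinearMap.smul_apply,
    aux_mulEquiv_tprod, aux_pairing_tprod, smul_eq_mul, Fin.prod_univ_add, Fin.append_left,
    Fin.append_right]
  ring

theorem aux_pairing_cast {K : Type*} [Field K] {E : Type*} [AddCommGroup E] [Module K E]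
    {m n : ℕ} (h : m = n) (a : ⨂[K]^m (Module.Dual K E)) (x : ⨂[K]^m E) :
    piTensorDualPairing K (Fin n) (fun _ => E) (TensorPower.cast K _ h a)
      (TensorPower.cast K _ h x) = piTensorDualPairing K (Fin m) (fun _ => E) a x := by
  subst h
  simp

/-- The triple product equivalence. -/
noncomputable def auxE (K : Type*) [Field K] (V : Type*) [AddCommGroup V] [Module K V]
    {n i N j : ℕ} (h : i + (N + j) = n) :
    (⨂[K]^i V) ⊗[K] ((⨂[K]^N V) ⊗[K] (⨂[K]^j V)) ≃ₗ[K] ⨂[K]^n V :=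
  (LinearEquiv.lTensor (⨂[K]^i V) (TensorPower.mulEquiv (n := N) (m := j))).trans
    ((TensorPower.mulEquiv (n := i) (m := N + j)).trans (TensorPower.cast K V h))

theorem aux_subMiddle (K : Type*) [Field K] (V : Type*) [AddCommGroup V] [Module K V]
    {N : ℕ} (U : Submodule K (⨂[K]^N V)) (n i j : ℕ) (h : i + (N + j) = n) :
    subMiddle K V U n i j h = LinearMap.range ((auxE K V h).toLinearMap ∘ₗ
      LinearMap.lTensor (⨂[K]^i V) (LinearMap.rTensor (⨂[K]^j V) U.subtype)) := by
  unfold subMiddle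
  rw [LinearMap.lTensor_comp]
  rfl

theorem aux_auxE_tmul {K : Type*} [Field K] {V : Type*} [AddCommGroup V] [Module K V]
    {n i N j : ℕ} (h : i + (N + j) = n) (a : ⨂[K]^i V) (b : ⨂[K]^N V) (c : ⨂[K]^j V) :
    auxE K V h (a ⊗ₜ[K] (b ⊗ₜ[K] c)) = TensorPower.cast K V h
      (TensorPower.mulEquiv (a ⊗ₜ[K] TensorPower.mulEquiv (b ⊗ₜ[K] c))) := rfl

theorem aux_pairing_auxE {K : Type*} [Field K] {E : Type*} [AddCommGroup E] [Module K E]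
    {n i N j : ℕ} (h : i + (N + j) = n) (a : ⨂[K]^i (Module.Dual K E))
    (b : ⨂[K]^N (Module.Dual K E)) (c : ⨂[K]^j (Module.Dual K E))
    (x : ⨂[K]^i E) (y : ⨂[K]^N E) (z : ⨂[K]^j E) :
    piTensorDualPairing K (Fin n) (fun _ => E) (auxE K _ h (a ⊗ₜ[K] (b ⊗ₜ[K] c)))
      (auxE K _ h (x ⊗ₜ[K] (y ⊗ₜ[K] z))) =
    piTensorDualPairing K (Fin i) (fun _ => E) a x *
      (piTensorDualPairing K (Fin N) (fun _ => E) b y *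
      piTensorDualPairing K (Fin j) (fun _ => E) c z) := by
  rw [aux_auxE_tmul, aux_auxE_tmul, aux_pairing_cast, aux_pairing_mul, aux_pairing_mul]

/-- Pure tensors of functionals span the dual of a triple tensor product. -/
theorem aux_dual_triple {K : Type*} [Field K] {P W S : Type*} [AddCommGroup P] [Module K P]
    [AddCommGroup W] [Module K W] [AddCommGroup S] [Module K S] [FiniteDimensional K P]
    [FiniteDimensional K W] [FiniteDimensional K S]
    (T : Submodule K (Module.Dual K (P ⊗[K] (W ⊗[K] S))))
    (hT : ∀ (a : Module.Dual K P) (b : Module.Dual K W) (c : Module.Dual K S),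
      TensorProduct.dualDistrib K P (W ⊗[K] S)
        (a ⊗ₜ[K] TensorProduct.dualDistrib K W S (b ⊗ₜ[K] c)) ∈ T)
    (g : Module.Dual K (P ⊗[K] (W ⊗[K] S))) : g ∈ T := by
  obtain ⟨t, rfl⟩ : ∃ t, TensorProduct.dualDistrib K P (W ⊗[K] S) t = g :=
    (TensorProduct.dualDistribEquiv K P (W ⊗[K] S)).surjective g
  induction t using TensorProduct.induction_on with
  | zero => simp
  | add x y hx hy => rw [map_add]; exact T.add_mem hx hy
  | tmul a u =>
    obtain ⟨t, rfl⟩ : ∃ t, TensorProduct.dualDistrib K W S t = u :=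
      (TensorProduct.dualDistribEquiv K W S).surjective u
    induction t using TensorProduct.induction_on with
    | zero => simp
    | add x y hx hy => rw [map_add, TensorProduct.tmul_add, map_add]; exact T.add_mem hx hy
    | tmul b c => exact hT a b c

theorem aux_exact {K : Type*} [Field K] {P Q S : Type*} [AddCommGroup P] [Module K P]
    [AddCommGroup Q] [Module K Q] [AddCommGroup S] [Module K S] (R : Submodule K Q) :
    Function.Exact (LinearMap.lTensor P (LinearMap.rTensor S R.subtype))
      (LinearMap.lTensor P (LinearMap.rTensor S R.mkQ)) :=
  lTensor_exact P (rTensor_exact S (LinearMap.exact_subtype_mkQ R) R.mkQ_surjective)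
    (LinearMap.rTensor_surjective S R.mkQ_surjective)

theorem aux_key (K : Type*) [Field K] (E : Type*) [AddCommGroup E] [Module K E]
    [FiniteDimensional K E] {N : ℕ} (R : Submodule K (⨂[K]^N E)) (n i j : ℕ)
    (h : i + (N + j) = n) :
    Submodule.map (piTensorDualPairing K (Fin n) (fun _ => E))
      (subMiddle K (Module.Dual K E)
          (Submodule.comap (piTensorDualPairing K (Fin N) (fun _ => E)) R.dualAnnihilator)
          n i j h) =
    (subMiddle K E R n i j h).dualAnnihilator := by
  rw [aux_subMiddle, aux_subMiddle]
  apply le_antisymm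
  · rintro _ ⟨_, ⟨t, rfl⟩, rfl⟩
    rw [Submodule.mem_dualAnnihilator]
    rintro _ ⟨w, rfl⟩
    simp only [LinearMap.comp_apply, LinearEquiv.coe_coe]
    induction t using TensorProduct.induction_on with
    | zero => simp
    | add x y hx hy => rw [map_add, map_add, map_add, LinearMap.add_apply, hx, hy, add_zero]
    | tmul a u =>
    induction u using TensorProduct.induction_on with
    | zero => simp
    | add x y hx hy =>
      rw [TensorProduct.tmul_add, map_add, map_add, map_add, LinearMap.add_apply, hx, hy, add_zero]
    | tmul b c =>
    induction w using TensorProduct.induction_on with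
    | zero => simp
    | add x y hx hy => rw [map_add, map_add, map_add, hx, hy, add_zero]
    | tmul p v =>
    induction v using TensorProduct.induction_on with
    | zero => simp
    | add x y hx hy =>
      rw [TensorProduct.tmul_add, map_add, map_add, map_add, hx, hy, add_zero]
    | tmul q s =>
    have hb := (Submodule.mem_dualAnnihilator _).1 (Submodule.mem_comap.1 b.2) q q.2
    simp only [LinearMap.lTensor_tmul, LinearMap.rTensor_tmul, Submodule.subtype_apply]
    rw [aux_pairing_auxE, hb, zero_mul, mul_zero]
  · intro φ hφ
    have hex2 := aux_exact (P := ⨂[K]^i E) (S := ⨂[K]^j E) R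
    set F := LinearMap.lTensor (⨂[K]^i E) (LinearMap.rTensor (⨂[K]^j E) R.mkQ) with hF
    let G : Module.Dual K ((⨂[K]^i E) ⊗[K] (((⨂[K]^N E) ⧸ R) ⊗[K] (⨂[K]^j E))) →ₗ[K]
        Module.Dual K (⨂[K]^n E) := (F ∘ₗ (auxE K E h).symm.toLinearMap).dualMap
    obtain ⟨g, rfl⟩ : ∃ g, G g = φ := by
      have : φ ∈ LinearMap.range G := by
        rw [LinearMap.range_dualMap_eq_dualAnnihilator_ker, Submodule.mem_dualAnnihilator]
        intro w hw
        rw [Submodule.mem_dualAnnihilator] at hφ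
        apply hφ
        obtain ⟨t, ht⟩ := (hex2 _).1 (LinearMap.mem_ker.1 hw)
        exact ⟨t, by simp [ht]⟩
      exact this
    rw [← Submodule.mem_comap]
    refine aux_dual_triple _ ?_ g
    intro a b c
    obtain ⟨a', ha'⟩ := aux_pairing_surj K E i a
    obtain ⟨b', hb'⟩ := aux_pairing_surj K E N (b ∘ₗ R.mkQ)
    obtain ⟨c', hc'⟩ := aux_pairing_surj K E j c
    have hbm : b' ∈ Submodule.comap (piTensorDualPairing K (Fin N) (fun _ => E))
        R.dualAnnihilator := by
      rw [Submodule.mem_comap, hb', Submodule.mem_dualAnnihilator]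
      intro w hw
      simp [(Submodule.Quotient.mk_eq_zero R).2 hw]
    refine ⟨_, ⟨a' ⊗ₜ[K] ((⟨b', hbm⟩ : Submodule.comap _ _) ⊗ₜ[K] c'), rfl⟩, ?_⟩
    have : ∀ w, piTensorDualPairing K (Fin n) (fun _ => E)
        (auxE K _ h (a' ⊗ₜ[K] (b' ⊗ₜ[K] c'))) (auxE K E h w) =
        TensorProduct.dualDistrib K _ _
          (a ⊗ₜ[K] TensorProduct.dualDistrib K _ _ (b ⊗ₜ[K] c)) (F w) := by
      intro w
      induction w using TensorProduct.induction_on with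
      | zero => simp
      | add x y hx hy => rw [map_add, map_add, map_add, map_add, hx, hy]
      | tmul p v =>
      induction v using TensorProduct.induction_on with
      | zero => simp
      | add x y hx hy =>
        rw [TensorProduct.tmul_add, map_add, map_add, map_add, map_add, hx, hy]
      | tmul q s =>
      rw [aux_pairing_auxE, ha', hb', hc', hF, LinearMap.lTensor_tmul, LinearMap.rTensor_tmul,
        TensorProduct.dualDistrib_apply, TensorProduct.dualDistrib_apply]
      rfl
    refine LinearMap.ext fun w => ?_
    have h2 := this ((auxE K E h).symm w)
    rw [LinearEquiv.apply_symm_apply] at h2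
    exact h2

end Helpers

/-- Let `K` be a field, `E` a finite-dimensional `K`-vector space,
`N ≥ 2`, `R ⊆ E^⊗N` a subspace and `n ≥ N`.  Let `R^⊥ ⊆ (E^*)^⊗N` be the annihilator of
`R` under the canonical pairing.  Under the canonical map `(E^*)^⊗n → (E^⊗n)^*`, the
subspace `Σ_{r+s=n-N} (E^*)^⊗r ⊗ R^⊥ ⊗ (E^*)^⊗s` of `(E^*)^⊗n` corresponds exactly to the
annihilator in `(E^⊗n)^*` of the subspace `⋂_{r+s=n-N} E^⊗r ⊗ R ⊗ E^⊗s` of `E^⊗n`. -/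
theorem statement14 (K : Type*) [Field K] (E : Type*) [AddCommGroup E] [Module K E]
    [FiniteDimensional K E] (N : ℕ) (hN : 2 ≤ N)
    (R : Submodule K (⨂[K]^N E)) (n : ℕ) (hn : N ≤ n) :
    Submodule.map (piTensorDualPairing K (Fin n) (fun _ => E))
      (⨆ i : Fin (n - N + 1),
        subMiddle K (Module.Dual K E)
          (Submodule.comap (piTensorDualPairing K (Fin N) (fun _ => E))
            R.dualAnnihilator)
          n i (n - N - i) (by omega)) =
    Submodule.dualAnnihilator
      (⨅ i : Fin (n - N + 1), subMiddle K E R n i (n - N - i) (by omega)) := by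
  rw [Submodule.map_iSup, Subspace.dualAnnihilator_iInf_eq]
  exact iSup_congr fun i => aux_key K E R n i (n - N - i) (by omega)
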